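/- Let p ≥ 2, s ∈ ℝ and t > 0. For N ≥ 1 and ξ ∈ ℝ set K_{N,ξ} = {ξ₁ ∈ ℝ : (ξ₁ ∈ [−N−2,−N] and ξ−ξ₁ ∈ [N,N+2]) or (ξ₁ ∈ [N,N+2] and ξ−ξ₁ ∈ [−N−2,−N])}, and for ξ ≠ 0 and ξ₁ ∈ K_{N,ξ} set φ(ξ,ξ₁) = (|ξ|^p − |ξ₁|^p − |ξ−ξ₁|^p) + i(−ξ³ + ξ₁³ + (ξ−ξ₁)³) ∈ ℂ, which is nonzero there. Then there exist c > 0 and N₀ ≥ 1 (depending on p, s, t) such that for every N ≥ N₀: ∫_{1/4 ≤ |ξ| ≤ 1/2} N^{2p} e^{−2t|ξ|^p} (1+ξ²)^{s} ξ² · | ∫_{K_{N,ξ}} (e^{t·φ(ξ,ξ₁)} − 1)/φ(ξ,ξ₁) dξ₁ |² dξ ≥ c. -/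

import Mathlib

open MeasureTheory Real

/-- The resonance set `K_{N,ξ}` from the ill-posedness argument. -/
def resonanceSet (N ξ : ℝ) : Set ℝ :=
  {ξ₁ : ℝ | (ξ₁ ∈ Set.Icc (-N - 2) (-N) ∧ ξ - ξ₁ ∈ Set.Icc N (N + 2)) ∨
            (ξ₁ ∈ Set.Icc N (N + 2) ∧ ξ - ξ₁ ∈ Set.Icc (-N - 2) (-N))}

/-- The phase function `φ(ξ, ξ₁)` from the ill-posedness argument. -/
noncomputable def phase (p ξ ξ₁ : ℝ) : ℂ :=
  ((|ξ| ^ p - |ξ₁| ^ p - |ξ - ξ₁| ^ p : ℝ) : ℂ) +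
    Complex.I * ((-ξ ^ 3 + ξ₁ ^ 3 + (ξ - ξ₁) ^ 3 : ℝ) : ℂ)

lemma aux_phase (p N ξ x : ℝ) (hp : 2 ≤ p) (hN : 1 ≤ N) (hξ : |ξ| ≤ 1 / 2)
    (hx : x ∈ resonanceSet N ξ) :
    (phase p ξ x).re ≤ -N ^ p ∧ -(2 * 3 ^ p * N ^ p) ≤ (phase p ξ x).re ∧
      |(phase p ξ x).im| ≤ 14 * N ^ p := by
  have hre : (phase p ξ x).re = |ξ| ^ p - |x| ^ p - |ξ - x| ^ p := by
    simp only [phase, Complex.add_re, Complex.ofReal_im, Complex.mul_re, Complex.I_re,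
        Complex.I_im, Complex.ofReal_re]; ring
  have him : (phase p ξ x).im = -3 * (ξ * (x * (ξ - x))) := by
    have : (phase p ξ x).im = -ξ ^ 3 + x ^ 3 + (ξ - x) ^ 3 := by
      simp only [phase, Complex.add_im, Complex.ofReal_im, Complex.mul_im, Complex.I_re,
        Complex.I_im, Complex.ofReal_re]; ring
    rw [this]; ring
  have hb : N ≤ |x| ∧ |x| ≤ N + 2 ∧ N ≤ |ξ - x| ∧ |ξ - x| ≤ N + 2 := by
    rcases hx with ⟨⟨h1, h2⟩, h3, h4⟩ | ⟨⟨h1, h2⟩, h3, h4⟩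
    · rw [abs_of_nonpos (by linarith : x ≤ 0), abs_of_nonneg (by linarith : 0 ≤ ξ - x)]
      refine ⟨?_, ?_, ?_, ?_⟩ <;> linarith
    · rw [abs_of_nonneg (by linarith : 0 ≤ x), abs_of_nonpos (by linarith : ξ - x ≤ 0)]
      refine ⟨?_, ?_, ?_, ?_⟩ <;> linarith
  obtain ⟨h1, h2, h3, h4⟩ := hb
  have p0 : 0 ≤ p := by linarith
  have n0 : 0 ≤ N := by linarith
  have e1 : N ^ p ≤ |x| ^ p := rpow_le_rpow n0 h1 p0
  have e2 : N ^ p ≤ |ξ - x| ^ p := rpow_le_rpow n0 h3 p0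
  have e3 : |x| ^ p ≤ 3 ^ p * N ^ p := by
    rw [← mul_rpow (by norm_num) n0]
    exact rpow_le_rpow (abs_nonneg _) (by linarith) p0
  have e4 : |ξ - x| ^ p ≤ 3 ^ p * N ^ p := by
    rw [← mul_rpow (by norm_num) n0]
    exact rpow_le_rpow (abs_nonneg _) (by linarith) p0
  have e5 : |ξ| ^ p ≤ 1 := rpow_le_one (abs_nonneg _) (by linarith) p0
  have e6 : 0 ≤ |ξ| ^ p := rpow_nonneg (abs_nonneg _) _
  have e7 : 1 ≤ N ^ p := one_le_rpow hN p0
  have e8 : N ^ 2 ≤ N ^ p := by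
    rw [← rpow_two]; exact rpow_le_rpow_of_exponent_le hN hp
  refine ⟨by rw [hre]; linarith, by rw [hre]; linarith, ?_⟩
  rw [him, abs_mul, abs_mul, abs_mul]
  have e9 : |x| * |ξ - x| ≤ (3 * N) * (3 * N) := by
    apply mul_le_mul <;> first | positivity | linarith
  have e10 : |ξ| * (|x| * |ξ - x|) ≤ (1 / 2) * ((3 * N) * (3 * N)) := by
    apply mul_le_mul hξ e9 <;> positivity
  have : |(-3 : ℝ)| = 3 := by norm_num
  rw [this]
  nlinarith

lemma aux_re (t M A : ℝ) (ht : 0 < t) (hM : 0 < M) (hA : 0 < A) (htM : 29 ≤ t * M) (z : ℂ)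
    (h1 : z.re ≤ -M) (h2 : -(A * M) ≤ z.re) (h3 : |z.im| ≤ 14 * M) :
    1 / (400 * A) / M ≤ ((Complex.exp (t * z) - 1) / z).re := by
  set a := z.re with ha
  set b := z.im with hb
  set E := Real.exp (t * a) with hE
  have hE0 : 0 < E := Real.exp_pos _
  have hE1 : E ≤ 1 / 30 := by
    have h : t * a ≤ -29 := by nlinarith
    have h5 : E ≤ Real.exp (-29) := Real.exp_le_exp.2 h
    have h6 : (30 : ℝ) ≤ Real.exp 29 := by
      have := Real.add_one_le_exp (29 : ℝ); linarith
    rw [Real.exp_neg] at h5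
    refine h5.trans ?_
    rw [one_div]
    exact inv_anti₀ (by norm_num) h6
  have hns : Complex.normSq z = a * a + b * b := Complex.normSq_apply z
  have hq : ((Complex.exp (t * z) - 1) / z).re =
      ((E * Real.cos (t * b) - 1) * a + E * Real.sin (t * b) * b) / (a * a + b * b) := by
    rw [Complex.div_re, hns]
    simp only [Complex.sub_re, Complex.sub_im, Complex.exp_re, Complex.exp_im, Complex.one_re,
      Complex.one_im, Complex.mul_re, Complex.mul_im, Complex.ofReal_re, Complex.ofReal_im,
      zero_mul, sub_zero, add_zero, ← ha, ← hb, ← hE]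
    ring
  have hb2 : |b| ≤ 14 * (-a) := by linarith
  have ha0 : 0 < -a := by linarith
  have hbb : b * b ≤ 196 * (a * a) := by
    rw [← abs_mul_abs_self b]; nlinarith [abs_nonneg b]
  have hnum : (-a) / 2 ≤ (E * Real.cos (t * b) - 1) * a + E * Real.sin (t * b) * b := by
    have c1 : E * Real.cos (t * b) ≤ E := by nlinarith [Real.cos_le_one (t * b)]
    have c2 : |E * Real.sin (t * b) * b| ≤ E * (14 * (-a)) := by
      rw [abs_mul, abs_mul, abs_of_pos hE0]
      have := Real.abs_sin_le_one (t * b)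
      apply mul_le_mul _ hb2 (abs_nonneg _) hE0.le
      nlinarith
    have c3 := (abs_le.1 c2).1
    nlinarith
  rw [hq, div_div, div_le_div_iff₀ (by positivity) (by nlinarith [mul_self_nonneg b])]
  have d1 : a * a + b * b ≤ 197 * ((-a) * (A * M)) := by nlinarith
  have d2 : (-a) / 2 * (400 * A * M) ≤
    ((E * Real.cos (t * b) - 1) * a + E * Real.sin (t * b) * b) * (400 * A * M) :=
    mul_le_mul_of_nonneg_right hnum (by positivity)
  have : 0 < -a * (A * M) := by positivity
  nlinarith

lemma aux_norm (t M : ℝ) (ht : 0 < t) (hM : 1 ≤ M) (z : ℂ)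
    (h1 : z.re ≤ -M) : ‖(Complex.exp (t * z) - 1) / z‖ ≤ 2 := by
  have hz : 1 ≤ ‖z‖ := by
    have := Complex.abs_re_le_norm z
    have := neg_abs_le z.re
    linarith
  rw [norm_div, div_le_iff₀ (by linarith)]
  have h2 : ‖Complex.exp (t * z)‖ ≤ 1 := by
    rw [Complex.norm_exp]
    apply Real.exp_le_one_iff.2
    simp only [Complex.mul_re, Complex.ofReal_re, Complex.ofReal_im, zero_mul, sub_zero]
    nlinarith
  have h3 := norm_sub_le (Complex.exp (t * z)) 1
  rw [norm_one] at h3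
  linarith

lemma aux_meas_set (N : ℝ) : MeasurableSet {q : ℝ × ℝ | q.2 ∈ resonanceSet N q.1} := by
  have h : {q : ℝ × ℝ | q.2 ∈ resonanceSet N q.1} =
      ((fun q : ℝ × ℝ => q.2) ⁻¹' Set.Icc (-N - 2) (-N) ∩
        (fun q : ℝ × ℝ => q.1 - q.2) ⁻¹' Set.Icc N (N + 2)) ∪
      ((fun q : ℝ × ℝ => q.2) ⁻¹' Set.Icc N (N + 2) ∩
        (fun q : ℝ × ℝ => q.1 - q.2) ⁻¹' Set.Icc (-N - 2) (-N)) := by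
    ext q
    exact Iff.rfl
  rw [h]
  have m1 : Measurable (fun q : ℝ × ℝ => q.2) := by fun_prop
  have m2 : Measurable (fun q : ℝ × ℝ => q.1 - q.2) := by fun_prop
  exact ((m1 measurableSet_Icc).inter (m2 measurableSet_Icc)).union
    ((m1 measurableSet_Icc).inter (m2 measurableSet_Icc))

lemma aux_meas_K (N ξ : ℝ) : MeasurableSet (resonanceSet N ξ) :=
  (aux_meas_set N).preimage (measurable_prodMk_left (x := ξ))

lemma aux_meas_phase (p : ℝ) : Measurable (fun q : ℝ × ℝ => phase p q.1 q.2) := by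
  unfold phase
  fun_prop

lemma aux_meas_F (p t : ℝ) : Measurable
    (fun q : ℝ × ℝ => (Complex.exp (t * phase p q.1 q.2) - 1) / phase p q.1 q.2) := by
  have := aux_meas_phase p
  fun_prop

lemma aux_meas_inner (p t N : ℝ) : StronglyMeasurable (fun ξ : ℝ =>
    ∫ x in resonanceSet N ξ, (Complex.exp (t * phase p ξ x) - 1) / phase p ξ x) := by
  have h : (fun ξ : ℝ =>
    ∫ x in resonanceSet N ξ, (Complex.exp (t * phase p ξ x) - 1) / phase p ξ x) =
    fun ξ : ℝ => ∫ x, ({q : ℝ × ℝ | q.2 ∈ resonanceSet N q.1}.indicator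
      (fun q : ℝ × ℝ => (Complex.exp (t * phase p q.1 q.2) - 1) / phase p q.1 q.2)) (ξ, x) := by
    funext ξ
    rw [← integral_indicator (aux_meas_K N ξ)]
    rfl
  rw [h]
  exact StronglyMeasurable.integral_prod_right
    ((aux_meas_F p t).indicator (aux_meas_set N)).stronglyMeasurable

lemma aux_sub (N ξ : ℝ) (hN : 1 ≤ N) : resonanceSet N ξ ⊆ Set.Icc (-N - 2) (N + 2) := by
  rintro x (⟨⟨h1, h2⟩, -⟩ | ⟨⟨h1, h2⟩, -⟩) <;> constructor <;> linarith

lemma aux_fin (N ξ : ℝ) (hN : 1 ≤ N) : volume (resonanceSet N ξ) < ⊤ :=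
  (measure_mono (aux_sub N ξ hN)).trans_lt (by simp)

lemma aux_vol (N ξ : ℝ) (hN : 1 ≤ N) (hξ : |ξ| ≤ 1 / 2) :
    1 ≤ volume.real (resonanceSet N ξ) := by
  have h : Set.Icc (N + 1 / 2) (N + 3 / 2) ⊆ resonanceSet N ξ := by
    rintro x ⟨h1, h2⟩
    have := abs_le.1 hξ
    right
    refine ⟨⟨?_, ?_⟩, ?_, ?_⟩ <;> linarith
  have h2 := measureReal_mono (μ := volume) h (aux_fin N ξ hN).ne
  rw [Real.volume_real_Icc] at h2
  refine le_trans (le_trans ?_ (le_max_left _ _)) h2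
  linarith

lemma aux_inner_upper (p t N ξ : ℝ) (hp : 2 ≤ p) (ht : 0 < t) (hN : 1 ≤ N) (hξ : |ξ| ≤ 1 / 2) :
    ‖∫ x in resonanceSet N ξ, (Complex.exp (t * phase p ξ x) - 1) / phase p ξ x‖
      ≤ 2 * (2 * N + 4) := by
  have h := norm_setIntegral_le_of_norm_le_const (μ := volume) (s := resonanceSet N ξ) (C := 2)
    (f := fun x => (Complex.exp (t * phase p ξ x) - 1) / phase p ξ x) (aux_fin N ξ hN)
    (fun x hx => aux_norm t (N ^ p) ht (one_le_rpow hN (by linarith)) _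
      (aux_phase p N ξ x hp hN hξ hx).1)
  have h2 := measureReal_mono (μ := volume) (aux_sub N ξ hN) (by simp)
  rw [Real.volume_real_Icc_of_le (by linarith)] at h2
  linarith

lemma aux_inner_lower (p t N ξ : ℝ) (hp : 2 ≤ p) (ht : 0 < t) (hN : 1 ≤ N) (htN : 29 ≤ t * N)
    (hξ : |ξ| ≤ 1 / 2) :
    1 / (400 * (2 * 3 ^ p)) / N ^ p ≤
    ‖∫ x in resonanceSet N ξ, (Complex.exp (t * phase p ξ x) - 1) / phase p ξ x‖ := by
  have hM : 1 ≤ N ^ p := one_le_rpow hN (by linarith)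
  have hNM : N ≤ N ^ p := by
    simpa using rpow_le_rpow_of_exponent_le hN (by linarith : (1 : ℝ) ≤ p)
  have hint : IntegrableOn (fun x => (Complex.exp (t * phase p ξ x) - 1) / phase p ξ x)
      (resonanceSet N ξ) := by
    refine Measure.integrableOn_of_bounded (M := 2) (aux_fin N ξ hN).ne ?_ ?_
    · exact ((aux_meas_F p t).comp (measurable_prodMk_left (x := ξ))).aestronglyMeasurable
    · refine (ae_restrict_iff' (aux_meas_K N ξ)).2 (Filter.Eventually.of_forall fun x hx => ?_)
      exact aux_norm t (N ^ p) ht hM _ (aux_phase p N ξ x hp hN hξ hx).1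
  have hκ : 0 ≤ 1 / (400 * (2 * (3 : ℝ) ^ p)) / N ^ p := by positivity
  refine le_trans ?_ (Complex.re_le_norm _)
  have hre := integral_re hint.integrable
  simp only [RCLike.re_eq_complex_re] at hre
  rw [← hre]
  have hlow := setIntegral_mono_on (μ := volume) (s := resonanceSet N ξ)
    (f := fun _ => 1 / (400 * (2 * (3 : ℝ) ^ p)) / N ^ p)
    (g := fun x => ((Complex.exp (t * phase p ξ x) - 1) / phase p ξ x).re)
    (integrableOn_const (aux_fin N ξ hN).ne) hint.integrable.re (aux_meas_K N ξ)
    (fun x hx => by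
      obtain ⟨h1, h2, h3⟩ := aux_phase p N ξ x hp hN hξ hx
      exact aux_re t (N ^ p) (2 * 3 ^ p) ht (by linarith) (by positivity)
        (by nlinarith) _ h1 h2 h3)
  refine le_trans ?_ hlow
  rw [setIntegral_const, smul_eq_mul]
  exact le_mul_of_one_le_left hκ (aux_vol N ξ hN hξ)

lemma aux_weight (s ξ : ℝ) (hξ : |ξ| ≤ 1 / 2) :
    (2 : ℝ) ^ (-|s|) ≤ (1 + ξ ^ 2) ^ s ∧ (1 + ξ ^ 2) ^ s ≤ (2 : ℝ) ^ |s| := by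
  have h1 : (1 : ℝ) ≤ 1 + ξ ^ 2 := by nlinarith [sq_nonneg ξ]
  have h2 : 1 + ξ ^ 2 ≤ 2 := by nlinarith [abs_le.1 hξ]
  have h3 : (1 + ξ ^ 2) ^ |s| ≤ (2 : ℝ) ^ |s| := rpow_le_rpow (by linarith) h2 (abs_nonneg s)
  constructor
  · refine le_trans ?_ (rpow_le_rpow_of_exponent_le h1 (neg_abs_le s))
    rw [rpow_neg (by norm_num), rpow_neg (by linarith)]
    exact inv_anti₀ (rpow_pos_of_pos (by linarith) _) h3
  · exact (rpow_le_rpow_of_exponent_le h1 (le_abs_self s)).trans h3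

theorem stmt_13 (p s t : ℝ) (hp : 2 ≤ p) (ht : 0 < t) :
    ∃ c : ℝ, 0 < c ∧ ∃ N₀ : ℝ, 1 ≤ N₀ ∧
      ∀ N : ℝ, N₀ ≤ N →
        c ≤ ∫ ξ in {ξ : ℝ | 1 / 4 ≤ |ξ| ∧ |ξ| ≤ 1 / 2},
              N ^ (2 * p) * Real.exp (-(2 * t * |ξ| ^ p)) * (1 + ξ ^ 2) ^ s * ξ ^ 2 *
                ‖∫ ξ₁ in resonanceSet N ξ,
                    (Complex.exp (t * phase p ξ ξ₁) - 1) / phase p ξ ξ₁‖ ^ 2 := by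
  set S : Set ℝ := {ξ : ℝ | 1 / 4 ≤ |ξ| ∧ |ξ| ≤ 1 / 2} with hS
  have hSm : MeasurableSet S := by
    have h : S = (fun x : ℝ => |x|) ⁻¹' Set.Icc (1 / 4) (1 / 2) := by
      ext q
      exact Iff.rfl
    have m1 : Measurable (fun x : ℝ => |x|) := by fun_prop
    rw [h]
    exact m1 measurableSet_Icc
  have hSsub : S ⊆ Set.Icc (-(1 / 2)) (1 / 2) := fun x hx => abs_le.1 hx.2
  have hSfin : volume S < ⊤ := (measure_mono hSsub).trans_lt (by simp)
  have hSvol : 1 / 4 ≤ volume.real S := by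
    have h : Set.Icc (1 / 4 : ℝ) (1 / 2) ⊆ S := by
      rintro x ⟨h1, h2⟩
      have : |x| = x := abs_of_nonneg (by linarith)
      exact ⟨by rw [this]; exact h1, by rw [this]; exact h2⟩
    have h2 := measureReal_mono (μ := volume) h hSfin.ne
    rw [Real.volume_real_Icc_of_le (by norm_num)] at h2
    linarith
  set κ : ℝ := 1 / (400 * (2 * 3 ^ p)) with hκ
  have hκ0 : 0 < κ := by positivity
  set d : ℝ := Real.exp (-(2 * t)) * 2 ^ (-|s|) * (1 / 16) * κ ^ 2 with hd
  have hd0 : 0 < d := by positivity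
  refine ⟨d / 4, by positivity, max 1 (29 / t), le_max_left _ _, fun N hN => ?_⟩
  have hN1 : 1 ≤ N := (le_max_left _ _).trans hN
  have htN : 29 ≤ t * N := by
    have := (le_max_right _ _).trans hN
    rw [div_le_iff₀ ht] at this
    linarith
  have hN0 : 0 < N := by linarith
  have hM : 0 < N ^ p := by positivity
  have h2p : N ^ (2 * p) = N ^ p * N ^ p := by rw [two_mul, rpow_add hN0]
  have hint : IntegrableOn (fun ξ => N ^ (2 * p) * Real.exp (-(2 * t * |ξ| ^ p)) *
      (1 + ξ ^ 2) ^ s * ξ ^ 2 * ‖∫ ξ₁ in resonanceSet N ξ,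
        (Complex.exp (t * phase p ξ ξ₁) - 1) / phase p ξ ξ₁‖ ^ 2) S := by
    refine Measure.integrableOn_of_bounded
      (M := N ^ (2 * p) * 1 * 2 ^ |s| * 1 * (2 * (2 * N + 4)) ^ 2) hSfin.ne ?_ ?_
    · have h := (aux_meas_inner p t N).measurable.norm
      have h' : Measurable (fun ξ : ℝ => N ^ (2 * p) * Real.exp (-(2 * t * |ξ| ^ p)) *
        (1 + ξ ^ 2) ^ s * ξ ^ 2) := by fun_prop
      exact (h'.mul (h.pow_const 2)).aestronglyMeasurable
    · refine (ae_restrict_iff' hSm).2 (Filter.Eventually.of_forall fun ξ hξ => ?_)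
      have hw := aux_weight s ξ hξ.2
      have hu := aux_inner_upper p t N ξ hp ht hN1 hξ.2
      have hw0 : 0 ≤ (1 + ξ ^ 2) ^ s := by positivity
      have he : Real.exp (-(2 * t * |ξ| ^ p)) ≤ 1 := by
        apply Real.exp_le_one_iff.2
        have : 0 ≤ 2 * t * |ξ| ^ p := by positivity
        linarith
      have hx2 : ξ ^ 2 ≤ 1 := by nlinarith [abs_le.1 hξ.2]
      rw [Real.norm_of_nonneg (by positivity)]
      have hw2 := hw.2
      gcongr
  have hlow := setIntegral_mono_on (μ := volume) (s := S) (f := fun _ => d)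
    (integrableOn_const hSfin.ne) hint hSm (fun ξ hξ => by
      have hw := (aux_weight s ξ hξ.2).1
      have hl := aux_inner_lower p t N ξ hp ht hN1 htN hξ.2
      have he : Real.exp (-(2 * t)) ≤ Real.exp (-(2 * t * |ξ| ^ p)) := by
        apply Real.exp_le_exp.2
        have : |ξ| ^ p ≤ 1 := rpow_le_one (abs_nonneg _) (by linarith [hξ.2]) (by linarith)
        nlinarith
      have hx2 : 1 / 16 ≤ ξ ^ 2 := by
        rw [← sq_abs]; nlinarith [hξ.1]
      have hdd : d = N ^ (2 * p) * Real.exp (-(2 * t)) * 2 ^ (-|s|) * (1 / 16) *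
          (κ / N ^ p) ^ 2 := by
        rw [h2p, hd]; field_simp
      rw [hdd]
      gcongr)
  refine le_trans ?_ hlow
  rw [setIntegral_const, smul_eq_mul]
  nlinarith
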